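/- Equality in the f-divergence dual at the subgradient: let p, q be pmfs on a finite type Ω with q(σ) > 0 for all σ, let f : ℝ → ℝ be convex, and let u : Ω → ℝ be such that for every σ, u(σ) is a subgradient of f at r(σ) := p(σ)/q(σ), i.e. f(t) ≥ f(r(σ)) + u(σ)·(t − r(σ)) for all t ∈ ℝ. Then for every σ the set { t·u(σ) − f(t) : t ∈ ℝ } is bounded above with supremum f*(u(σ)) = u(σ)·r(σ) − f(r(σ)), and d_f(p;q) = Σ_σ u(σ)·p(σ) − Σ_σ f*(u(σ))·q(σ). -/

import Mathlib

section Subgradient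

variable {E G : Type*} [AddGroup E] [AddCommGroup G] [PartialOrder G] [IsOrderedAddMonoid G]

/-- `φ` is a subgradient of `f` at `x`: the graph of `f` lies above the graph of the translate of
`φ` that meets it at `x`. The functional `φ` is only assumed additive; a real number `u` is
encoded as the functional `AddMonoidHom.mulRight u`. -/
def IsSubgradientAt (f : E → G) (φ : E →+ G) (x : E) : Prop :=
  ∀ y, f x + φ (y - x) ≤ f y

theorem isSubgradientAt_iff_isGreatest {f : E → G} {φ : E →+ G} {x : E} :
    IsSubgradientAt f φ x ↔ IsGreatest (Set.range fun y => φ y - f y) (φ x - f x) := by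
  have rearrange (y : E) : f x + φ (y - x) ≤ f y ↔ φ y - f y ≤ φ x - f x := by
    rw [map_sub, sub_le_sub_iff, add_sub, sub_le_iff_le_add, add_comm (f x), add_comm (f y)]
  simp only [IsSubgradientAt, rearrange, IsGreatest, Set.mem_range_self, true_and,
    mem_upperBounds, Set.forall_mem_range]

theorem isSubgradientAt_mulRight_iff {R : Type*} [CommRing R] [PartialOrder R]
    {f : R → R} {u x : R} :
    IsSubgradientAt f (AddMonoidHom.mulRight u) x ↔ ∀ t, f x + u * (t - x) ≤ f t := by
  simp only [IsSubgradientAt, AddMonoidHom.mulRight_apply, mul_comm u]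

end Subgradient

section FDivergence

variable {Ω 𝕜 : Type*} [Fintype Ω] [Field 𝕜]

/-- The `f`-divergence `d_f(p; q)` of two finite families of weights. The weights need not be
normalised, and a term with `q σ = 0` is read as `0`. -/
def fDivergence (f : 𝕜 → 𝕜) (p q : Ω → 𝕜) : 𝕜 :=
  ∑ σ, q σ * f (p σ / q σ)

theorem fDivergence_eq_sum_sub_sum (f : 𝕜 → 𝕜) (p : Ω → 𝕜) {q : Ω → 𝕜} (hq : ∀ σ, q σ ≠ 0)
    (u : Ω → 𝕜) :
    fDivergence f p q =
      ∑ σ, u σ * p σ - ∑ σ, (u σ * (p σ / q σ) - f (p σ / q σ)) * q σ := by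
  rw [fDivergence, ← Finset.sum_sub_distrib]
  refine Finset.sum_congr rfl fun σ _ => ?_
  calc q σ * f (p σ / q σ)
      = u σ * (p σ / q σ * q σ) - (u σ * (p σ / q σ) - f (p σ / q σ)) * q σ := by ring
    _ = u σ * p σ - (u σ * (p σ / q σ) - f (p σ / q σ)) * q σ := by
      rw [div_mul_cancel₀ _ (hq σ)]

theorem fdiv_dual_eq_at_subgradient_general [LinearOrder 𝕜] [IsStrictOrderedRing 𝕜]
    (p : Ω → 𝕜) {q : Ω → 𝕜} (hq : ∀ σ, q σ ≠ 0) (f : 𝕜 → 𝕜) (u : Ω → 𝕜)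
    (hsubgrad : ∀ σ, IsSubgradientAt f (AddMonoidHom.mulRight (u σ)) (p σ / q σ)) :
    (∀ σ, IsLUB (Set.range fun t : 𝕜 => t * u σ - f t)
      (u σ * (p σ / q σ) - f (p σ / q σ))) ∧
    fDivergence f p q =
      ∑ σ, u σ * p σ - ∑ σ, (u σ * (p σ / q σ) - f (p σ / q σ)) * q σ := by
  refine ⟨fun σ => ?_, fDivergence_eq_sum_sub_sum f p hq u⟩
  rw [mul_comm (u σ)]
  exact (isSubgradientAt_iff_isGreatest.mp (hsubgrad σ)).isLUB

end FDivergence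

/-- Equality in the f-divergence dual bound at the subgradient. -/
theorem fdiv_dual_eq_at_subgradient {Ω : Type*} [Fintype Ω]
    (p q : Ω → ℝ)
    (hp_nonneg : ∀ σ, 0 ≤ p σ) (hp_sum : ∑ σ, p σ = 1)
    (hq_pos : ∀ σ, 0 < q σ) (hq_sum : ∑ σ, q σ = 1)
    (f : ℝ → ℝ) (hf : ConvexOn ℝ Set.univ f)
    (u : Ω → ℝ)
    (hsubgrad : ∀ σ, ∀ t : ℝ, f (p σ / q σ) + u σ * (t - p σ / q σ) ≤ f t) :
    (∀ σ, IsLUB (Set.range fun t : ℝ => t * u σ - f t)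
        (u σ * (p σ / q σ) - f (p σ / q σ))) ∧
    (∑ σ, q σ * f (p σ / q σ)) =
      (∑ σ, u σ * p σ) -
        (∑ σ, (u σ * (p σ / q σ) - f (p σ / q σ)) * q σ) :=
  fdiv_dual_eq_at_subgradient_general p (fun σ => (hq_pos σ).ne') f u
    fun σ => isSubgradientAt_mulRight_iff.mpr (hsubgrad σ)
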